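/- 𝔏(F₂)^w_{O(n)} = CF: a language is context-free if and only if it is recognized by some weakly linear-time bounded F₂-automaton. -/

import Mathlib

/-- A `G`-automaton over input alphabet `α`: a nondeterministic finite automaton
equipped with a register holding an element of the group `G`. -/
structure GAutomaton (α : Type*) (G : Type*) [Group G] where
  /-- the (finite) state set -/
  Q : Type
  finQ : Finite Q
  /-- the initial state -/
  q0 : Q
  /-- the accepting states -/
  acc : Set Q
  /-- the (finite) transition relation; `none` stands for ε -/
  δ : Set (Q × Option α × Q × G)
  finδ : δ.Finite

namespace GAutomaton

variable {α : Type*} {G : Type*} [Group G]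

/-- One computation step between configurations `(state, register, remaining input)`. -/
def Step (M : GAutomaton α G) (c c' : M.Q × G × List α) : Prop :=
  ∃ σ m, (c.1, σ, c'.1, m) ∈ M.δ ∧ c'.2.1 = c.2.1 * m ∧
    match σ with
    | none => c'.2.2 = c.2.2
    | some s => c.2.2 = s :: c'.2.2

/-- `M.StepsIn k c c'` : configuration `c'` is reachable from `c` in exactly `k` steps. -/
def StepsIn (M : GAutomaton α G) : ℕ → (M.Q × G × List α) → (M.Q × G × List α) → Prop
  | 0, c, c' => c = c'
  | n + 1, c, c' => ∃ d, M.Step c d ∧ M.StepsIn n d c'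

/-- `M` accepts the word `w` within `t` computation steps. -/
def AcceptsIn (M : GAutomaton α G) (w : List α) (t : ℕ) : Prop :=
  ∃ k ≤ t, ∃ q ∈ M.acc, M.StepsIn k (M.q0, 1, w) (q, 1, [])

/-- The language recognized by `M`. -/
def lang (M : GAutomaton α G) : Language α := {w | ∃ t, M.AcceptsIn w t}

/-- `M` is real-time if every transition consumes an input symbol. -/
def RealTime (M : GAutomaton α G) : Prop := ∀ tr ∈ M.δ, tr.2.1 ≠ none

end GAutomaton

/-- `L ∈ 𝔏(G)` : the language `L` is recognized by some `G`-automaton. -/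
def GRecognizable (G : Type*) [Group G] {α : Type*} (L : Language α) : Prop :=
  ∃ M : GAutomaton α G, M.lang = L

/-- `L ∈ 𝔏(G)ʷ_{t(n)}` : `L` is recognized by a weakly `t(n)` time-bounded `G`-automaton. -/
def GRecognizableInTime (G : Type*) [Group G] {α : Type*} (L : Language α) (t : ℕ → ℕ) : Prop :=
  ∃ M : GAutomaton α G, M.lang = L ∧ ∀ w ∈ L, M.AcceptsIn w (t w.length)

/-- `L ∈ 𝔏(G)ʷ_{O(n)}` : `L` is recognized by a weakly linear-time bounded `G`-automaton. -/
def GRecognizableLinTime (G : Type*) [Group G] {α : Type*} (L : Language α) : Prop :=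
  ∃ C : ℕ, GRecognizableInTime G L (fun n => C * n + C)


section FreeGroupEmbedding

/-- The action of `ℤ` on `FreeGroup ℤ` by translation of the generators. -/
def FreeGroup.shift : Multiplicative ℤ →* MulAut (FreeGroup ℤ) where
  toFun n := FreeGroup.freeGroupCongr (Equiv.addRight n.toAdd)
  map_one' := by
    ext x
    simp
  map_mul' m n := by
    ext x
    simp only [MulAut.mul_apply, FreeGroup.freeGroupCongr_apply, FreeGroup.map.comp]
    congr 2
    funext k
    simp [add_left_comm, add_comm]

/-- The free group on two generators contains a free group of countably infinite rank. -/
theorem exists_injective_freeGroup_fin_two (ι : Type*) [Countable ι] :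
    ∃ φ : FreeGroup ι →* FreeGroup (Fin 2), Function.Injective φ := by
  obtain ⟨f, hf⟩ := exists_injective_nat ι
  let ψ : FreeGroup ℤ →* FreeGroup (Fin 2) :=
    FreeGroup.lift fun n => FreeGroup.of 1 ^ n * FreeGroup.of 0 * (FreeGroup.of 1 ^ n)⁻¹
  let χ : FreeGroup (Fin 2) →* FreeGroup ℤ ⋊[FreeGroup.shift] Multiplicative ℤ :=
    FreeGroup.lift ![SemidirectProduct.inl (FreeGroup.of 0),
      SemidirectProduct.inr (Multiplicative.ofAdd 1)]
  have hχ : χ.comp ψ = SemidirectProduct.inl := by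
    ext1 n
    have h := SemidirectProduct.inl_aut (φ := FreeGroup.shift) (Multiplicative.ofAdd n)
      (FreeGroup.of 0)
    have e : (Multiplicative.ofAdd (1 : ℤ)) ^ n = Multiplicative.ofAdd n := by
      rw [← ofAdd_zsmul]; simp
    simp only [MonoidHom.comp_apply, ψ, χ, FreeGroup.lift_apply_of, map_mul, map_zpow, map_inv,
      Matrix.cons_val_zero, Matrix.cons_val_one]
    rw [← map_zpow, e, ← map_inv, ← h]
    simp [FreeGroup.shift]
  have hψ : Function.Injective ψ := by
    have : Function.Injective (χ.comp ψ) := hχ ▸ SemidirectProduct.inl_injective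
    exact Function.Injective.of_comp (f := χ) this
  have hinj : Function.Injective fun i => (f i : ℤ) := fun _ _ h => hf (Int.ofNat_inj.mp h)
  exact ⟨ψ.comp (FreeGroup.map fun i => (f i : ℤ)),
    hψ.comp (FreeGroup.map_injective hinj)⟩

end FreeGroupEmbedding

section TreeMetric

/-- The length of the longest common prefix of two lists. -/
def List.commonPrefixLength {β : Type*} [DecidableEq β] : List β → List β → ℕ
  | a :: l, b :: m => if a = b then commonPrefixLength l m + 1 else 0
  | _, _ => 0

theorem List.min_commonPrefixLength_le {β : Type*} [DecidableEq β] (x y z : List β) :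
    min (x.commonPrefixLength y) (y.commonPrefixLength z) ≤ x.commonPrefixLength z := by
  induction x generalizing y z with
  | nil => cases y <;> simp [commonPrefixLength]
  | cons a x ih =>
    cases y with
    | nil => simp [commonPrefixLength]
    | cons b y =>
      cases z with
      | nil => simp [commonPrefixLength]
      | cons c z =>
        have := ih y z
        simp only [commonPrefixLength]
        grind

namespace FreeGroup

variable {β : Type*} [DecidableEq β]

theorem norm_mk_of_isReduced {x : List (β × Bool)} (hx : IsReduced x) :
    norm (mk x) = x.length := by
  rw [norm, toWord_mk, hx.reduce_eq]

theorem isReduced_invRev {x : List (β × Bool)} (hx : IsReduced x) : IsReduced (invRev x) := by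
  rw [isReduced_iff_reduce_eq] at hx ⊢
  rw [reduce_invRev, hx]

theorem norm_inv_mk_mul_mk {x y : List (β × Bool)} (hx : IsReduced x) (hy : IsReduced y) :
    norm ((mk x)⁻¹ * mk y) + 2 * x.commonPrefixLength y = x.length + y.length := by
  induction x generalizing y with
  | nil =>
    rw [← one_eq_mk]
    simp [List.commonPrefixLength, norm_mk_of_isReduced hy]
  | cons a x ih =>
    cases y with
    | nil =>
      rw [← one_eq_mk, mul_one, norm_inv_eq]
      simp [List.commonPrefixLength, norm_mk_of_isReduced hx]
    | cons b y =>
      by_cases hab : a = b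
      · subst hab
        have h := ih (List.IsChain.tail hx) (List.IsChain.tail hy)
        have e : (mk (a :: x))⁻¹ * mk (a :: y) = (mk x)⁻¹ * mk y := by
          rw [← List.singleton_append (l := x), ← List.singleton_append (l := y), ← mul_mk, ← mul_mk]
          group
        rw [e]
        simp only [List.commonPrefixLength, List.length_cons]
        grind
      · have hred : IsReduced (invRev (a :: x) ++ b :: y) := by
          refine List.IsChain.append (isReduced_invRev hx) hy ?_
          obtain ⟨a, s⟩ := a
          obtain ⟨b, t⟩ := b
          cases s <;> cases t <;> simp_all [invRev]
        rw [inv_mk, mul_mk, norm_mk_of_isReduced hred]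
        simp [List.commonPrefixLength, hab]

/-- The four-point condition: the word metric of a free group is `0`-hyperbolic. -/
theorem norm_add_norm_inv_mul_le_max (x y z : FreeGroup β) :
    norm y + norm (x⁻¹ * z) ≤ max (norm x + norm (y⁻¹ * z)) (norm z + norm (x⁻¹ * y)) := by
  have key (u v : FreeGroup β) : norm (u⁻¹ * v) + 2 * u.toWord.commonPrefixLength v.toWord
      = norm u + norm v := by
    simpa [mk_toWord, norm] using
      norm_inv_mk_mul_mk (isReduced_toWord (x := u)) (isReduced_toWord (x := v))
  have h := List.min_commonPrefixLength_le x.toWord y.toWord z.toWord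
  have := key x y
  have := key y z
  have := key x z
  omega

/-- If each factor has norm at most `D` and each product of two consecutive factors has norm
more than `D`, then the norms of the partial products increase. -/
theorem norm_lt_norm_mul_prod {D : ℕ} (x h : FreeGroup β) (l : List (FreeGroup β))
    (hl : ∀ g ∈ h :: l, norm g ≤ D) (hc : (h :: l).IsChain fun g g' => D < norm (g * g'))
    (hx : norm x ≤ norm (x * h)) (hne : l ≠ []) : norm x < norm (x * (h :: l).prod) := by
  induction l generalizing x h with
  | nil => exact absurd rfl hne
  | cons k l ih =>
    have h4 := norm_add_norm_inv_mul_le_max x (x * h) (x * h * k)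
    have e₁ : x⁻¹ * (x * h * k) = h * k := by group
    have e₂ : (x * h)⁻¹ * (x * h * k) = k := by group
    have e₃ : x⁻¹ * (x * h) = h := by group
    rw [e₁, e₂, e₃] at h4
    rw [List.isChain_cons_cons] at hc
    have hh := hl h (by simp)
    have hk := hl k (by simp)
    have hlt : norm (x * h) < norm (x * h * k) := by omega
    rcases eq_or_ne l [] with rfl | hl'
    · simpa [mul_assoc] using hx.trans_lt hlt
    · have := ih (x * h) k (fun g hg => hl g (by simp at hg ⊢; tauto)) hc.2 hlt.le hl'
      rw [List.prod_cons, ← mul_assoc]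
      omega

/-- In a trivial product of at least two elements of norm at most `D`, some two consecutive
factors have a product of norm at most `D`. -/
theorem exists_norm_mul_le_of_prod_eq_one {D : ℕ} (l : List (FreeGroup β))
    (hl : ∀ g ∈ l, norm g ≤ D) (hprod : l.prod = 1) (hlen : 2 ≤ l.length) :
    ∃ l₁ g g' l₂, l = l₁ ++ g :: g' :: l₂ ∧ norm (g * g') ≤ D := by
  by_contra! hcon
  obtain ⟨h, l, rfl⟩ := List.exists_cons_of_length_pos (l := l) (by omega)
  have hc : (h :: l).IsChain fun g g' => D < norm (g * g') := by
    rw [List.isChain_iff_forall_rel_of_append_cons_cons]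
    intro g g' l₁ l₂ e
    exact hcon l₁ g g' l₂ e
  have := norm_lt_norm_mul_prod 1 h l hl hc (by simp) (by rintro rfl; simp at hlen)
  rw [hprod] at this
  simp at this

theorem finite_setOf_norm_le [Finite β] (D : ℕ) : {g : FreeGroup β | norm g ≤ D}.Finite :=
  (List.finite_length_le (β × Bool) D).preimage toWord_injective.injOn

end FreeGroup

end TreeMetric

section GrammarSemantics

namespace ContextFreeGrammar

variable {α : Type*}

/-- The language denoted by a symbol under an interpretation of the nonterminals. -/
def symbolLanguage {N : Type*} (I : N → Language α) : Symbol α N → Language α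
  | .terminal a => {[a]}
  | .nonterminal A => I A

theorem prod_symbolLanguage_le_of_derives (g : ContextFreeGrammar α) (I : g.NT → Language α)
    (hI : ∀ r ∈ g.rules, (r.output.map (symbolLanguage I)).prod ≤ I r.input)
    {s t : List (Symbol α g.NT)} (h : g.Derives s t) :
    (t.map (symbolLanguage I)).prod ≤ (s.map (symbolLanguage I)).prod := by
  induction h with
  | refl => rfl
  | tail _ hp ih =>
    refine le_trans ?_ ih
    obtain ⟨r, hr, hrw⟩ := hp
    obtain ⟨p, q, rfl, rfl⟩ := hrw.exists_parts
    simp only [List.map_append, List.prod_append, List.map_cons, List.map_nil, List.prod_singleton]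
    have : (r.output.map (symbolLanguage I)).prod ≤ symbolLanguage I (.nonterminal r.input) := hI r hr
    gcongr

/-- The languages generated by the nonterminals are contained in every interpretation which is
closed under the rules. -/
theorem mem_prod_symbolLanguage_of_derives (g : ContextFreeGrammar α) (I : g.NT → Language α)
    (hI : ∀ r ∈ g.rules, (r.output.map (symbolLanguage I)).prod ≤ I r.input)
    {s : List (Symbol α g.NT)} {w : List α} (h : g.Derives s (w.map .terminal)) :
    w ∈ (s.map (symbolLanguage I)).prod := by
  refine prod_symbolLanguage_le_of_derives g I hI h ?_
  clear h
  induction w with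
  | nil => exact Language.nil_mem_one
  | cons a w ih => exact ⟨[a], rfl, w, ih, rfl⟩

theorem derives_singleton_of_mem {g : ContextFreeGrammar α} {r : ContextFreeRule α g.NT}
    (hr : r ∈ g.rules) : g.Derives [.nonterminal r.input] r.output :=
  Produces.single ⟨r, hr, .input_output⟩

theorem Derives.append {g : ContextFreeGrammar α} {s s' t t' : List (Symbol α g.NT)}
    (hs : g.Derives s s') (ht : g.Derives t t') : g.Derives (s ++ t) (s' ++ t') :=
  (hs.append_right t).trans (ht.append_left s')

end ContextFreeGrammar

end GrammarSemantics

section Steps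

namespace GAutomaton

variable {α : Type*} {G : Type*} [Group G] {M : GAutomaton α G}

theorem step_iff {c c' : M.Q × G × List α} :
    M.Step c c' ↔ ∃ σ m, (c.1, σ, c'.1, m) ∈ M.δ ∧ c'.2.1 = c.2.1 * m ∧
      c.2.2 = σ.toList ++ c'.2.2 := by
  unfold Step
  refine exists_congr fun σ => exists_congr fun m => ?_
  cases σ <;> simp [eq_comm]

theorem StepsIn.trans {j k : ℕ} {c d e : M.Q × G × List α} (h : M.StepsIn j c d)
    (h' : M.StepsIn k d e) : M.StepsIn (j + k) c e := by
  induction j generalizing c with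
  | zero => cases h; simpa using h'
  | succ j ih =>
    obtain ⟨b, hb, hbd⟩ := h
    rw [Nat.add_right_comm]
    exact ⟨b, hb, ih hbd⟩

theorem stepsIn_one_of_mem {p q : M.Q} {σ : Option α} {m : G} (h : (p, σ, q, m) ∈ M.δ) (x : G)
    (v : List α) : M.StepsIn 1 (p, x, σ.toList ++ v) (q, x * m, v) :=
  ⟨_, step_iff.mpr ⟨σ, m, h, rfl, rfl⟩, rfl⟩

end GAutomaton

end Steps

section AutomatonToGrammar

namespace GAutomaton

variable {α : Type} (M : GAutomaton α (FreeGroup (Fin 2))) (D : ℕ)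

/-- The rules of the triple construction. The nonterminal `some (p, g, q)` generates the words
that can be read from `p` to `q` while the register gets multiplied by `g`. -/
inductive TripleRule :
    ContextFreeRule α (Option (M.Q × FreeGroup (Fin 2) × M.Q)) → Prop
  | start (f : M.Q) (hf : f ∈ M.acc) : TripleRule ⟨none, [.nonterminal (some (M.q0, 1, f))]⟩
  | refl (p : M.Q) : TripleRule ⟨some (p, 1, p), []⟩
  | transition (tr : M.Q × Option α × M.Q × FreeGroup (Fin 2)) (htr : tr ∈ M.δ) :
      TripleRule ⟨some (tr.1, tr.2.2.2, tr.2.2.1), tr.2.1.toList.map .terminal⟩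
  | comp (p r q : M.Q) (g h : FreeGroup (Fin 2)) (hg : g.norm ≤ D) (hh : h.norm ≤ D) :
      TripleRule ⟨some (p, g * h, q), [.nonterminal (some (p, g, r)), .nonterminal (some (r, h, q))]⟩

theorem finite_setOf_tripleRule : {r | M.TripleRule D r}.Finite := by
  have := M.finQ
  have hδ := M.finδ
  have hB := FreeGroup.finite_setOf_norm_le (β := Fin 2) D
  have h₁ := Set.finite_range fun f : M.Q =>
    (⟨none, [.nonterminal (some (M.q0, 1, f))]⟩ :
      ContextFreeRule α (Option (M.Q × FreeGroup (Fin 2) × M.Q)))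
  have h₂ := Set.finite_range fun p : M.Q =>
    (⟨some (p, 1, p), []⟩ : ContextFreeRule α (Option (M.Q × FreeGroup (Fin 2) × M.Q)))
  have h₃ := hδ.image fun tr =>
    (⟨some (tr.1, tr.2.2.2, tr.2.2.1), tr.2.1.toList.map .terminal⟩ :
      ContextFreeRule α (Option (M.Q × FreeGroup (Fin 2) × M.Q)))
  have h₄ := ((Set.finite_univ (α := M.Q × M.Q × M.Q)).prod (hB.prod hB)).image fun x =>
    (⟨some (x.1.1, x.2.1 * x.2.2, x.1.2.2), [.nonterminal (some (x.1.1, x.2.1, x.1.2.1)),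
      .nonterminal (some (x.1.2.1, x.2.2, x.1.2.2))]⟩ :
      ContextFreeRule α (Option (M.Q × FreeGroup (Fin 2) × M.Q)))
  refine (((h₁.union h₂).union h₃).union h₄).subset ?_
  rintro _ (⟨f, hf⟩ | ⟨p⟩ | ⟨tr, htr⟩ | ⟨p, r, q, g, h, hg, hh⟩)
  · exact .inl (.inl (.inl ⟨f, rfl⟩))
  · exact .inl (.inl (.inr ⟨p, rfl⟩))
  · exact .inl (.inr ⟨tr, htr, rfl⟩)
  · exact .inr ⟨((p, r, q), (g, h)), ⟨trivial, hg, hh⟩, rfl⟩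

/-- The grammar of the triple construction. -/
noncomputable def tripleGrammar : ContextFreeGrammar α where
  NT := Option (M.Q × FreeGroup (Fin 2) × M.Q)
  initial := none
  rules := (M.finite_setOf_tripleRule D).toFinset

variable {M D}

theorem mem_tripleGrammar_rules {r : ContextFreeRule α (M.tripleGrammar D).NT} :
    r ∈ (M.tripleGrammar D).rules ↔ M.TripleRule D r :=
  (M.finite_setOf_tripleRule D).mem_toFinset

theorem derives_of_tripleRule {r : ContextFreeRule α (M.tripleGrammar D).NT}
    (h : M.TripleRule D r) : (M.tripleGrammar D).Derives [.nonterminal r.input] r.output :=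
  ContextFreeGrammar.derives_singleton_of_mem (mem_tripleGrammar_rules.mpr h)

variable (M) in
/-- The intended meaning of the nonterminals of the triple construction. -/
def tripleLanguage : Option (M.Q × FreeGroup (Fin 2) × M.Q) → Language α
  | none => M.lang
  | some (p, g, q) => {w | ∃ k, ∀ x v, M.StepsIn k (p, x, w ++ v) (q, x * g, v)}

theorem TripleRule.prod_le {r : ContextFreeRule α (Option (M.Q × FreeGroup (Fin 2) × M.Q))}
    (hr : M.TripleRule D r) :
    (r.output.map (ContextFreeGrammar.symbolLanguage M.tripleLanguage)).prod ≤
      M.tripleLanguage r.input := by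
  rcases hr with ⟨f, hf⟩ | ⟨p⟩ | ⟨tr, htr⟩ | ⟨p, r, q, g, h, hg, hh⟩
  · intro w hw
    simp only [List.map_cons, List.map_nil, List.prod_singleton] at hw
    obtain ⟨k, hk⟩ := hw
    exact ⟨k, k, le_rfl, f, hf, by simpa using hk 1 []⟩
  · rintro w (rfl : w = [])
    exact ⟨0, fun x v => by simp [StepsIn]⟩
  · obtain ⟨p, σ, q, m⟩ := tr
    intro w hw
    have hw : w = σ.toList := by
      cases σ
      · exact hw
      · simp only [Option.toList_some, List.map_cons, List.map_nil, List.prod_singleton] at hw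
        exact hw
    subst hw
    exact ⟨1, stepsIn_one_of_mem htr⟩
  · intro w hw
    simp only [List.map_cons, List.map_nil, List.prod_cons, List.prod_nil, mul_one] at hw
    obtain ⟨u, ⟨j, hj⟩, v, ⟨k, hk⟩, rfl⟩ := hw
    refine ⟨j + k, fun x t => ?_⟩
    have h₁ := hj x (v ++ t)
    have h₂ := hk (x * g) t
    simpa [mul_assoc] using h₁.trans h₂

theorem tripleGrammar_language_le : (M.tripleGrammar D).language ≤ M.lang := by
  intro w hw
  have := (M.tripleGrammar D).mem_prod_symbolLanguage_of_derives M.tripleLanguage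
    (fun r hr => (mem_tripleGrammar_rules.mp hr).prod_le) hw
  rw [List.map_singleton, List.prod_singleton] at this
  exact this

variable (M D) in
/-- Runs of the automaton in which each step is a derivation of the triple construction. The list
records the group elements multiplied to the register. -/
inductive CoarseRun : M.Q → List (FreeGroup (Fin 2)) → M.Q → List α → Prop
  | nil (p : M.Q) : CoarseRun p [] p []
  | cons {p r q : M.Q} {g : FreeGroup (Fin 2)} {l : List (FreeGroup (Fin 2))} {u v : List α}
      (hu : (M.tripleGrammar D).Derives [.nonterminal (some (p, g, r))] (u.map .terminal))
      (hg : g.norm ≤ D) (hv : CoarseRun r l q v) : CoarseRun p (g :: l) q (u ++ v)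

theorem CoarseRun.norm_le {p q : M.Q} {l : List (FreeGroup (Fin 2))} {w : List α}
    (h : M.CoarseRun D p l q w) : ∀ g ∈ l, g.norm ≤ D := by
  induction h with
  | nil => simp
  | cons _ hg _ ih => simpa [hg] using ih

theorem CoarseRun.merge {p q : M.Q} {l₁ l₂ : List (FreeGroup (Fin 2))} {g h : FreeGroup (Fin 2)}
    {w : List α} (hw : M.CoarseRun D p (l₁ ++ g :: h :: l₂) q w) (hgh : (g * h).norm ≤ D) :
    M.CoarseRun D p (l₁ ++ (g * h) :: l₂) q w := by
  induction l₁ generalizing p w with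
  | nil =>
    obtain _ | ⟨hu, hg, _ | ⟨hv, hh, hw⟩⟩ := hw
    rw [← List.append_assoc]
    refine .cons ?_ hgh hw
    rw [List.map_append]
    exact (derives_of_tripleRule (.comp _ _ _ g h hg hh)).trans (hu.append hv)
  | cons a l₁ ih =>
    obtain _ | ⟨hu, ha, hw⟩ := hw
    exact .cons hu ha (ih hw)

theorem CoarseRun.derives {p q : M.Q} {l : List (FreeGroup (Fin 2))} {w : List α}
    (h : M.CoarseRun D p l q w) (hl : l.prod = 1) :
    (M.tripleGrammar D).Derives [.nonterminal (some (p, 1, q))] (w.map .terminal) := by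
  induction hn : l.length generalizing l with
  | zero =>
    obtain rfl := List.length_eq_zero_iff.mp hn
    cases h
    exact derives_of_tripleRule (.refl _)
  | succ n ih =>
    by_cases hlen : 2 ≤ l.length
    · obtain ⟨l₁, g, g', l₂, rfl, hgg⟩ :=
        FreeGroup.exists_norm_mul_le_of_prod_eq_one l h.norm_le hl hlen
      refine ih (h.merge hgg) ?_ ?_
      · simpa [mul_assoc] using hl
      · simp at hn ⊢
        omega
    · obtain ⟨g, rfl⟩ := List.length_eq_one_iff.mp (by omega : l.length = 1)
      obtain rfl : g = 1 := by simpa using hl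
      obtain _ | ⟨hu, _, _ | _⟩ := h
      simpa using hu

theorem exists_coarseRun_of_stepsIn (hD : ∀ tr ∈ M.δ, tr.2.2.2.norm ≤ D) {k : ℕ} {p q : M.Q}
    {x y : FreeGroup (Fin 2)} {w : List α} (h : M.StepsIn k (p, x, w) (q, y, [])) :
    ∃ l, M.CoarseRun D p l q w ∧ y = x * l.prod := by
  induction k generalizing p x w with
  | zero =>
    cases h
    exact ⟨[], .nil _, by simp⟩
  | succ k ih =>
    obtain ⟨⟨r, z, v⟩, hs, hk⟩ := h
    obtain ⟨σ, m, hm, hz, hw⟩ := step_iff.mp hs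
    dsimp only at hm hz hw
    subst hz hw
    obtain ⟨l, hl, rfl⟩ := ih hk
    exact ⟨m :: l, .cons (derives_of_tripleRule (.transition _ hm)) (hD _ hm) hl,
      by simp [mul_assoc]⟩

variable (M) in
theorem isContextFree_lang : M.lang.IsContextFree := by
  obtain ⟨D, hD⟩ := (M.finδ.image fun tr => tr.2.2.2.norm).bddAbove
  have hD : ∀ tr ∈ M.δ, tr.2.2.2.norm ≤ D := fun tr h => hD ⟨tr, h, rfl⟩
  refine ⟨M.tripleGrammar D, le_antisymm tripleGrammar_language_le ?_⟩
  rintro w ⟨t, k, -, q, hq, hk⟩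
  obtain ⟨l, hl, hprod⟩ := exists_coarseRun_of_stepsIn hD hk
  exact (derives_of_tripleRule (.start q hq)).trans (hl.derives (by simpa using hprod.symm))

end GAutomaton

end AutomatonToGrammar

section BinaryParse

variable {N α : Type*}

/-- `BinaryParse T R A w k`: the word `w` has a binary parse tree with root label `A`, leaves
labelled according to `T` and inner nodes labelled according to `R`. The number `k` counts `1` for
each leaf and `3` for each inner node. -/
inductive BinaryParse (T : N → Option α → Prop) (R : N → N → N → Prop) : N → List α → ℕ → Prop
  | leaf {A : N} {o : Option α} (h : T A o) : BinaryParse T R A o.toList 1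
  | node {A X Y : N} {u v : List α} {j k : ℕ} (h : R A X Y) (hu : BinaryParse T R X u j)
      (hv : BinaryParse T R Y v k) : BinaryParse T R A (u ++ v) (j + k + 3)

namespace BinaryParse

/-- The transitions of the automaton that traverses binary parse trees. In state `some A` it is
about to read a word with a parse tree whose root is labelled `A`, in state `none` it has just read
such a word. Descending into the left and right child of a node with labels `π` multiplies the
register by the generators `Sum.inl π` and `Sum.inr π`, and the return by their inverses. -/
inductive Transition {G : Type*} [Group G] (T : N → Option α → Prop) (R : N → N → N → Prop)
    (φ : FreeGroup ((N × N × N) ⊕ (N × N × N)) →* G) :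
    Option N × Option α × Option N × G → Prop
  | left {A X Y : N} (h : R A X Y) :
      Transition T R φ (some A, none, some X, φ (.of (.inl (A, X, Y))))
  | read {A : N} {o : Option α} (h : T A o) : Transition T R φ (some A, o, none, 1)
  | right {A X Y : N} (h : R A X Y) : Transition T R φ
      (none, none, some Y, φ ((.of (.inl (A, X, Y)))⁻¹ * .of (.inr (A, X, Y))))
  | up {A X Y : N} (h : R A X Y) :
      Transition T R φ (none, none, none, φ (.of (.inr (A, X, Y)))⁻¹)

theorem finite_setOf_transition [Finite N] [Finite α] {G : Type*} [Group G]
    (T : N → Option α → Prop) (R : N → N → N → Prop)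
    (φ : FreeGroup ((N × N × N) ⊕ (N × N × N)) →* G) : {t | Transition T R φ t}.Finite := by
  have h₁ := Set.finite_range fun π : N × N × N =>
    ((some π.1, none, some π.2.1, φ (.of (.inl π))) : Option N × Option α × Option N × G)
  have h₂ := Set.finite_range fun x : N × Option α =>
    ((some x.1, x.2, none, 1) : Option N × Option α × Option N × G)
  have h₃ := Set.finite_range fun π : N × N × N =>
    ((none, none, some π.2.2, φ ((.of (.inl π))⁻¹ * .of (.inr π))) :
      Option N × Option α × Option N × G)
  have h₄ := Set.finite_range fun π : N × N × N =>
    ((none, none, none, φ (.of (.inr π))⁻¹) : Option N × Option α × Option N × G)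
  refine (((h₁.union h₂).union h₃).union h₄).subset ?_
  rintro _ (@⟨A, X, Y, h⟩ | @⟨A, o, h⟩ | @⟨A, X, Y, h⟩ | @⟨A, X, Y, h⟩)
  · exact .inl (.inl (.inl ⟨(A, X, Y), rfl⟩))
  · exact .inl (.inl (.inr ⟨(A, o), rfl⟩))
  · exact .inl (.inr ⟨(A, X, Y), rfl⟩)
  · exact .inr ⟨(A, X, Y), rfl⟩

/-- The automaton that traverses binary parse trees with root label `S`. -/
def automaton {N : Type} [Finite N] [Finite α] {G : Type*} [Group G] (T : N → Option α → Prop)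
    (R : N → N → N → Prop) (φ : FreeGroup ((N × N × N) ⊕ (N × N × N)) →* G) (S : N) :
    GAutomaton α G where
  Q := Option N
  finQ := inferInstance
  q0 := some S
  acc := {none}
  δ := {t | Transition T R φ t}
  finδ := finite_setOf_transition T R φ

/-- The relation between consecutive letters of the reduced word in the register, the upper letter
(further to the right in the word) coming first. -/
def StackRel (x y : ((N × N × N) ⊕ (N × N × N)) × Bool) : Prop :=
  (x.1 = y.1 → x.2 = y.2) ∧
    (x.2 = true → y.2 = false → ∃ π, x.1 = .inr π ∧ y.1 = .inl π)

/-- The words that may be read after the subtree just completed, when the pending descents are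
given by the list. -/
def continuation (T : N → Option α → Prop) (R : N → N → N → Prop) :
    List ((N × N × N) ⊕ (N × N × N)) → Language α
  | [] => {[]}
  | .inl π :: s => {w | ∃ u v k, w = u ++ v ∧ BinaryParse T R π.2.2 u k ∧ v ∈ continuation T R s}
  | .inr _ :: s => continuation T R s

/-- The words that lead to acceptance from a given state with given pending descents. -/
def remainder (T : N → Option α → Prop) (R : N → N → N → Prop)
    (s : List ((N × N × N) ⊕ (N × N × N))) : Option N → Language α
  | none => continuation T R s
  | some A => {w | ∃ u v k, w = u ++ v ∧ BinaryParse T R A u k ∧ v ∈ continuation T R s}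

theorem isReduced_reverse {t : List (((N × N × N) ⊕ (N × N × N)) × Bool)}
    (ht : t.IsChain StackRel) : FreeGroup.IsReduced t.reverse :=
  List.isChain_reverse.mpr (ht.imp fun _ _ h e => (h.1 e.symm).symm)

variable {N : Type} [Finite N] [Finite α] {G : Type*} [Group G] {T : N → Option α → Prop}
  {R : N → N → N → Prop} {φ : FreeGroup ((N × N × N) ⊕ (N × N × N)) →* G} {S : N}

theorem stepsIn {A : N} {w : List α} {k : ℕ} (h : BinaryParse T R A w k) (g : G) (v : List α) :
    (automaton T R φ S).StepsIn k (some A, g, w ++ v) (none, g, v) := by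
  induction h generalizing g v with
  | leaf h =>
    have := GAutomaton.stepsIn_one_of_mem (M := automaton T R φ S) (.read h) g v
    rwa [mul_one] at this
  | @node A X Y u w j k h _ _ ihu ihv =>
    have h₁ := GAutomaton.stepsIn_one_of_mem (M := automaton T R φ S) (.left h) g (u ++ w ++ v)
    have h₂ := ihu (g * φ (.of (.inl (A, X, Y)))) (w ++ v)
    have h₃ := GAutomaton.stepsIn_one_of_mem (M := automaton T R φ S) (.right h)
      (g * φ (.of (.inl (A, X, Y)))) (w ++ v)
    have h₄ := ihv (g * φ (.of (.inr (A, X, Y)))) v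
    have h₅ := GAutomaton.stepsIn_one_of_mem (M := automaton T R φ S) (.up h)
      (g * φ (.of (.inr (A, X, Y)))) v
    rw [map_inv, mul_inv_cancel_right] at h₅
    rw [map_mul, map_inv, ← mul_assoc, mul_inv_cancel_right] at h₃
    rw [← List.append_assoc] at h₂
    have := h₁.trans (h₂.trans (h₃.trans (h₄.trans h₅)))
    rwa [show 1 + (j + (1 + (k + 1))) = j + k + 3 by omega] at this

/-- A negative letter on the stack can never be cancelled, so that an accepting run corresponds to
the traversal of a parse tree. -/
theorem mem_remainder_of_stepsIn (hφ : Function.Injective φ) {n : ℕ} {q : Option N}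
    {t : List (((N × N × N) ⊕ (N × N × N)) × Bool)} {w : List α} (ht : t.IsChain StackRel)
    (hq : q ≠ none → ∀ x ∈ t.head?, x.2 = true)
    (h : (automaton T R φ S).StepsIn n (q, φ (FreeGroup.mk t.reverse), w) (none, 1, [])) :
    ∃ s, t = s.map (·, true) ∧ w ∈ remainder T R s q := by
  classical
  induction n generalizing q t w with
  | zero =>
    obtain ⟨rfl, h₁, rfl⟩ : q = none ∧ φ (FreeGroup.mk t.reverse) = 1 ∧ w = [] := by
      have h : (q, φ (FreeGroup.mk t.reverse), w) = ((none : Option N), (1 : G), ([] : List α)) := h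
      simpa using h
    rw [← map_one φ, hφ.eq_iff, ← FreeGroup.toWord_eq_nil_iff, FreeGroup.toWord_mk,
      (isReduced_reverse ht).reduce_eq, List.reverse_eq_nil_iff] at h₁
    exact ⟨[], by simp [h₁], rfl⟩
  | succ n ih =>
    obtain ⟨⟨q', z, v⟩, hs, hn⟩ := h
    obtain ⟨σ, m, hm, hz, hw⟩ := GAutomaton.step_iff.mp hs
    dsimp only at hm hz hw
    subst hz hw
    clear hs
    obtain @⟨A, X, Y, h⟩ | @⟨A, o, h⟩ | @⟨A, X, Y, h⟩ | @⟨A, X, Y, h⟩ := hm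
    · rw [← map_mul, FreeGroup.of, FreeGroup.mul_mk, ← List.reverse_cons] at hn
      obtain ⟨s, hs, u, w, k, rfl, hu, hw⟩ := ih (List.isChain_cons.mpr
        ⟨fun y hy => by simp [StackRel, hq (by simp) y hy], ht⟩) (by simp) hn
      obtain ⟨i, s, rfl, hi, rfl⟩ := List.map_eq_cons_iff.mp hs.symm
      obtain rfl : i = .inl (A, X, Y) := by simpa using hi
      obtain ⟨u', w, k', rfl, hu', hw⟩ := hw
      exact ⟨s, rfl, u ++ u', w, _, by simp, .node h hu hu', hw⟩
    · rw [mul_one] at hn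
      obtain ⟨s, rfl, hw⟩ := ih ht (by simp) hn
      exact ⟨s, rfl, _, _, _, rfl, .leaf h, hw⟩
    · rw [← map_mul, ← mul_assoc, FreeGroup.of, FreeGroup.of, FreeGroup.inv_mk] at hn
      by_cases htop : ∃ t₀, t = (.inl (A, X, Y), true) :: t₀
      · obtain ⟨t₀, rfl⟩ := htop
        rw [List.isChain_cons] at ht
        have e : FreeGroup.mk ((Sum.inl (A, X, Y), true) :: t₀).reverse *
            FreeGroup.mk (FreeGroup.invRev [(Sum.inl (A, X, Y), true)]) *
            FreeGroup.mk [(Sum.inr (A, X, Y), true)] =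
            FreeGroup.mk ((Sum.inr (A, X, Y), true) :: t₀).reverse := by
          rw [List.reverse_cons, List.reverse_cons, ← FreeGroup.mul_mk, ← FreeGroup.mul_mk,
            ← FreeGroup.inv_mk, mul_inv_cancel_right]
        rw [e] at hn
        have hpos : ∀ y ∈ t₀.head?, y.2 = true := fun y hy => by
          simpa [StackRel] using (ht.1 y hy).2
        obtain ⟨s, hs, u, w, k, rfl, hu, hw⟩ := ih (List.isChain_cons.mpr
          ⟨fun y hy => by simp [StackRel, hpos y hy], ht.2⟩) (by simp) hn
        obtain ⟨i, s, rfl, hi, rfl⟩ := List.map_eq_cons_iff.mp hs.symm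
        obtain rfl : i = .inr (A, X, Y) := by simpa using hi
        exact ⟨.inl (A, X, Y) :: s, rfl, u, w, k, rfl, hu, hw⟩
      · rw [FreeGroup.mul_mk, FreeGroup.mul_mk] at hn
        have hc : List.IsChain StackRel ((Sum.inr (A, X, Y), true) ::
            (Sum.inl (A, X, Y), false) :: t) := by
          refine .cons_cons ⟨by simp, by simp⟩ (List.isChain_cons.mpr ⟨fun y hy => ?_, ht⟩)
          refine ⟨fun e => ?_, by simp⟩
          obtain ⟨t₀, rfl⟩ := List.head?_eq_some_iff.mp hy
          obtain ⟨i, b⟩ := y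
          cases b
          · rfl
          · obtain rfl : Sum.inl (A, X, Y) = i := e
            exact absurd ⟨t₀, rfl⟩ htop
        obtain ⟨s, hs, -⟩ := ih hc (by simp) (by simpa [FreeGroup.invRev] using hn)
        have := hs ▸ List.mem_cons_of_mem _ List.mem_cons_self
        simp at this
    · rw [← map_mul, FreeGroup.of, FreeGroup.inv_mk] at hn
      by_cases htop : ∃ t₀, t = (.inr (A, X, Y), true) :: t₀
      · obtain ⟨t₀, rfl⟩ := htop
        rw [List.reverse_cons, ← FreeGroup.mul_mk, ← FreeGroup.inv_mk, mul_inv_cancel_right] at hn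
        obtain ⟨s, rfl, hw⟩ := ih ht.tail (by simp) hn
        exact ⟨.inr (A, X, Y) :: s, rfl, hw⟩
      · rw [FreeGroup.mul_mk] at hn
        have hc : List.IsChain StackRel ((Sum.inr (A, X, Y), false) :: t) := by
          refine List.isChain_cons.mpr ⟨fun y hy => ⟨fun e => ?_, by simp⟩, ht⟩
          obtain ⟨t₀, rfl⟩ := List.head?_eq_some_iff.mp hy
          obtain ⟨i, b⟩ := y
          cases b
          · rfl
          · obtain rfl : Sum.inr (A, X, Y) = i := e
            exact absurd ⟨t₀, rfl⟩ htop
        obtain ⟨s, hs, -⟩ := ih (q := none) hc (by simp) (by simpa [FreeGroup.invRev] using hn)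
        have := hs ▸ List.mem_cons_self
        simp at this

theorem mem_automaton_lang_iff (hφ : Function.Injective φ) {w : List α} :
    w ∈ (automaton T R φ S).lang ↔ ∃ k, BinaryParse T R S w k := by
  constructor
  · rintro ⟨-, n, -, q, rfl, hn⟩
    obtain ⟨s, hs, u, v, k, rfl, hu, hv⟩ := mem_remainder_of_stepsIn (q := some S) (t := []) hφ
      .nil (by simp) (by rw [List.reverse_nil, ← FreeGroup.one_eq_mk, map_one]; exact hn)
    obtain rfl := List.map_eq_nil_iff.mp hs.symm
    obtain rfl : v = [] := hv
    exact ⟨k, by simpa using hu⟩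
  · rintro ⟨k, hk⟩
    have := hk.stepsIn (φ := φ) (S := S) 1 []
    rw [List.append_nil] at this
    exact ⟨k, k, le_rfl, none, rfl, this⟩

end BinaryParse

end BinaryParse

section GrammarToAutomaton

namespace ContextFreeGrammar

variable {α : Type*} (g : ContextFreeGrammar α)

/-- The sentential forms occurring in the initial form or in the right hand side of a rule. -/
def factors : Set (List (Symbol α g.NT)) :=
  {l | l <:+: [.nonterminal g.initial] ∨ ∃ r ∈ g.rules, l <:+: r.output}

theorem finite_factors : g.factors.Finite := by
  have hfin (o : List (Symbol α g.NT)) : {l | l <:+: o}.Finite :=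
    o.sublists.finite_toSet.subset fun l hl => List.mem_sublists.mpr (List.IsInfix.sublist hl)
  refine ((hfin [.nonterminal g.initial]).union
    (g.rules.finite_toSet.biUnion fun r _ => hfin r.output)).subset ?_
  rintro l (h | ⟨r, hr, h⟩)
  · exact .inl h
  · exact .inr (Set.mem_biUnion hr h)

variable {g}

theorem mem_factors_mono {l m : List (Symbol α g.NT)} (hm : m ∈ g.factors) (h : l <:+: m) :
    l ∈ g.factors :=
  hm.imp h.trans fun ⟨r, hr, hmr⟩ => ⟨r, hr, h.trans hmr⟩

/-- Binary parse trees whose labels are factors of the grammar and whose local branchings are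
arbitrary derivations. -/
abbrev FactorParse : g.factors → List α → ℕ → Prop :=
  BinaryParse (fun A o => g.Derives A.1 (o.toList.map .terminal))
    (fun A X Y => g.Derives A.1 (X.1 ++ Y.1))

theorem FactorParse.derives {A : g.factors} {w : List α} {k : ℕ} (h : FactorParse A w k) :
    g.Derives A.1 (w.map .terminal) := by
  induction h with
  | leaf h => exact h
  | node h _ _ ihu ihv => simpa using h.trans (ihu.append ihv)

theorem FactorParse.of_derives {A X : g.factors} {w : List α} {k : ℕ} (h : FactorParse X w k)
    (hA : g.Derives A.1 X.1) : FactorParse A w k := by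
  cases h with
  | leaf h => exact .leaf (hA.trans h)
  | node h hu hv => exact .node (hA.trans h) hu hv

/-- The word is derived from the factor and, unless it is empty, has a parse tree of linear
size. -/
def ShortlyParsed (A : g.factors) (w : List α) : Prop :=
  g.Derives A.1 (w.map .terminal) ∧ (w ≠ [] → ∃ k, k + 3 ≤ 4 * w.length ∧ FactorParse A w k)

theorem ShortlyParsed.of_derives {A X : g.factors} {w : List α} (h : ShortlyParsed X w)
    (hA : g.Derives A.1 X.1) : ShortlyParsed A w :=
  ⟨hA.trans h.1, fun hw => (h.2 hw).imp fun _ hk => ⟨hk.1, hk.2.of_derives hA⟩⟩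

theorem ShortlyParsed.append {A X Y : g.factors} {u v : List α} (hu : ShortlyParsed X u)
    (hv : ShortlyParsed Y v) (hA : g.Derives A.1 (X.1 ++ Y.1)) : ShortlyParsed A (u ++ v) := by
  rcases eq_or_ne u [] with rfl | hu'
  · exact hv.of_derives (hA.trans (by simpa using hu.1.append_right Y.1))
  rcases eq_or_ne v [] with rfl | hv'
  · simpa using hu.of_derives (hA.trans (by simpa using hv.1.append_left X.1))
  obtain ⟨j, hj, hj'⟩ := hu.2 hu'
  obtain ⟨k, hk, hk'⟩ := hv.2 hv'
  refine ⟨by simpa using hA.trans (hu.1.append hv.1), fun _ => ⟨j + k + 3, ?_, .node hA hj' hk'⟩⟩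
  rw [List.length_append]
  omega

variable (g) in
/-- The words for which a nonterminal, if it is a factor, is shortly parsed. -/
def shortLanguage (A : g.NT) : Language α :=
  {w | ∀ h : [.nonterminal A] ∈ g.factors, ShortlyParsed ⟨_, h⟩ w}

theorem shortlyParsed_of_mem_prod {l : List (Symbol α g.NT)} (hl : l ∈ g.factors) {w : List α}
    (hw : w ∈ (l.map (symbolLanguage g.shortLanguage)).prod) : ShortlyParsed ⟨l, hl⟩ w := by
  induction l generalizing w with
  | nil =>
    obtain rfl : w = [] := hw
    exact ⟨.refl _, fun h => absurd rfl h⟩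
  | cons x l ih =>
    rw [List.map_cons, List.prod_cons] at hw
    obtain ⟨u, hu, v, hv, rfl⟩ := hw
    have hx : [x] ∈ g.factors := mem_factors_mono hl ⟨[], l, by simp⟩
    refine ShortlyParsed.append (X := ⟨[x], hx⟩) ?_
      (ih (mem_factors_mono hl ⟨[x], [], by simp⟩) hv) (.refl _)
    cases x with
    | terminal a =>
      obtain rfl : u = [a] := hu
      exact ⟨.refl _, fun _ => ⟨1, by simp, .leaf (o := some a) (.refl _)⟩⟩
    | nonterminal A => exact hu hx

theorem shortlyParsed_of_derives {l : List (Symbol α g.NT)} (hl : l ∈ g.factors) {w : List α}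
    (hw : g.Derives l (w.map .terminal)) : ShortlyParsed ⟨l, hl⟩ w := by
  refine shortlyParsed_of_mem_prod hl (g.mem_prod_symbolLanguage_of_derives _ ?_ hw)
  intro r hr w hw h
  exact (shortlyParsed_of_mem_prod (.inr ⟨r, hr, List.infix_rfl⟩) hw).of_derives
    (derives_singleton_of_mem hr)

end ContextFreeGrammar

theorem Language.IsContextFree.gRecognizableLinTime {α : Type} [Finite α] {L : Language α}
    (hL : L.IsContextFree) : GRecognizableLinTime (FreeGroup (Fin 2)) L := by
  obtain ⟨g, rfl⟩ := hL
  have := g.finite_factors.to_subtype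
  let S : g.factors := ⟨[.nonterminal g.initial], .inl List.infix_rfl⟩
  obtain ⟨φ, hφ⟩ := exists_injective_freeGroup_fin_two
    ((g.factors × g.factors × g.factors) ⊕ (g.factors × g.factors × g.factors))
  refine ⟨4, BinaryParse.automaton (fun A o => g.Derives A.1 (o.toList.map .terminal))
    (fun A X Y => g.Derives A.1 (X.1 ++ Y.1)) φ S, ?_, ?_⟩
  all_goals
    have short {w : List α} (hw : w ∈ g.language) :
        ∃ k ≤ 4 * w.length + 4, ContextFreeGrammar.FactorParse S w k := by
      rcases eq_or_ne w [] with rfl | hne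
      · exact ⟨1, by simp, .leaf (o := none) hw⟩
      · obtain ⟨k, hk, h⟩ := (ContextFreeGrammar.shortlyParsed_of_derives S.2 hw).2 hne
        exact ⟨k, by omega, h⟩
  · ext w
    rw [BinaryParse.mem_automaton_lang_iff hφ]
    exact ⟨fun ⟨_, h⟩ => ContextFreeGrammar.FactorParse.derives h,
      fun hw => (short hw).imp fun _ h => h.2⟩
  · intro w hw
    obtain ⟨k, hk, h⟩ := short hw
    have := h.stepsIn (φ := φ) (S := S) 1 []
    rw [List.append_nil] at this
    exact ⟨k, hk, none, rfl, this⟩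

end GrammarToAutomaton

/-- `𝔏(F₂)ʷ_{O(n)} = CF`: a language is context-free iff it is
recognized by some weakly linear-time bounded `F₂`-automaton. -/
theorem cf_eq_lintime_F2 {α : Type} [Fintype α] (L : Language α) :
    L.IsContextFree ↔ GRecognizableLinTime (FreeGroup (Fin 2)) L := by
  refine ⟨fun h => h.gRecognizableLinTime, ?_⟩
  rintro ⟨C, M, rfl, -⟩
  exact M.isContextFree_lang
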